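/- Let V be a real Banach space, V₁, …, V_N closed subspaces of V, and |·| a continuous seminorm on V with kernel 𝒩 = ker|·| such that there exists C♯ > 0 with inf_{ψ ∈ 𝒩} ‖v + ψ‖ ≤ C♯|v| for all v ∈ V. Let F₀, F₁ : V → ℝ be convex and Gâteaux differentiable with Gâteaux derivatives F₀', F₁', with F₀(v + ψ) = F₀(v) for all v ∈ V and ψ ∈ 𝒩. Let ε > 0, q > 1, and let C_tri > 0 satisfy d_{F₁}(x + y; v) ≤ C_tri·(d_{F₁}(x; v) + d_{F₁}(y; v)) for all v, x, y ∈ V. Fix v ∈ V, let φ ∈ 𝒩 with φ ≠ 0 and ξ ∈ J*𝒩° with ξ ≠ 0, and suppose φ = Σ_{j=1}^N φ_j with φ_j ∈ V_j ∩ 𝒩 and ξ = Σ_{j=1}^N ξ_j with ξ_j ∈ V_j. Then |φ + ξ|^q + ε‖φ + ξ‖^q > 0 and (Σ_{j=1}^N [d_{F₀}(φ_j + ξ_j; v) + ε·d_{F₁}(φ_j + ξ_j; v)]) / (|φ + ξ|^q + ε‖φ + ξ‖^q) ≤ Σ_{j=1}^N d_{F₀}(ξ_j; v)/|ξ|^q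 + (2^q + 1)·C_tri·Σ_{j=1}^N (d_{F₁}(φ_j; v)/‖φ‖^q + d_{F₁}(ξ_j; v)/‖ξ‖^q). -/

import Mathlib

/-- `f` is the Gâteaux derivative of `F` at `v`. -/
def HasGateauxDerivAt {V : Type*} [NormedAddCommGroup V] [NormedSpace ℝ V]
    (F : V → ℝ) (f : V →L[ℝ] ℝ) (v : V) : Prop :=
  ∀ w : V, Filter.Tendsto (fun t : ℝ => (F (v + t • w) - F v) / t)
    (nhdsWithin (0 : ℝ) {(0 : ℝ)}ᶜ) (nhds (f w))

/-!
A functional `f` that vanishes on `ker s`, with `f ξ = ‖ξ‖ ^ 2` and `‖f‖ = ‖ξ‖`, forces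
`‖ξ‖ ≤ ‖ψ + ξ‖` for all `ψ ∈ ker s`: `ξ` is Birkhoff orthogonal to `ker s`. Hence `s ξ > 0`, and
`‖ξ‖` and `‖φ‖ ≤ ‖φ + ξ‖ + ‖ξ‖` are controlled by `‖φ + ξ‖`, with constants `1` and `2`; the second
gives the factor `2 ^ q`. Neither `s` nor the Bregman distance of `F₀` sees summands in `ker s`, and
the bound `(A + ε * B) / (S + ε * M) ≤ A / S + B / M` makes the estimate independent of `ε`.
-/

section RealInequalities

variable {𝕜 : Type*} [Field 𝕜] [LinearOrder 𝕜] [IsStrictOrderedRing 𝕜]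

theorem add_mul_div_add_mul_le {a b c d ε : 𝕜} (ha : 0 ≤ a) (hb : 0 ≤ b) (hc : 0 < c)
    (hd : 0 < d) (hε : 0 ≤ ε) : (a + ε * b) / (c + ε * d) ≤ a / c + b / d := by
  have hcd : 0 < c + ε * d := by positivity
  have hfirst : a ≤ a / c * (c + ε * d) := by
    rw [mul_add, div_mul_cancel₀ a hc.ne']
    exact le_add_of_nonneg_right (by positivity)
  have hsecond : ε * b ≤ b / d * (c + ε * d) := by
    rw [mul_add, mul_left_comm, div_mul_cancel₀ b hd.ne']
    exact le_add_of_nonneg_left (by positivity)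
  rw [div_le_iff₀ hcd, add_mul]
  exact add_le_add hfirst hsecond

theorem add_div_le_mul_div_add_div {a b c p m r : 𝕜} (ha : 0 < a) (hb : 0 < b) (hm : 0 < m)
    (hc : 0 ≤ c) (hp : 0 ≤ p) (hr : 0 ≤ r) (ham : a ≤ c * m) (hbm : b ≤ m) :
    (p + r) / m ≤ (c + 1) * (p / a + r / b) := by
  have hfirst : p / m ≤ c * (p / a) := by
    rw [← mul_div_assoc, div_le_div_iff₀ hm ha, mul_right_comm, mul_comm _ p]
    exact mul_le_mul_of_nonneg_left ham hp
  have hsecond : r / m ≤ r / b := div_le_div_of_nonneg_left hr hb hbm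
  calc (p + r) / m = p / m + r / m := add_div p r m
    _ ≤ c * (p / a) + r / b := add_le_add hfirst hsecond
    _ ≤ c * (p / a) + r / b + (p / a + c * (r / b)) := le_add_of_nonneg_right (by positivity)
    _ = (c + 1) * (p / a + r / b) := by ring

end RealInequalities

section Orthogonality

theorem map_add_eq_of_map_eq_zero {S E R : Type*} [AddCommGroup E] [AddCommGroup R] [LinearOrder R]
    [IsOrderedAddMonoid R] [FunLike S E R] [AddGroupSeminormClass S E R] (s : S) {x : E}
    (hx : s x = 0) (y : E) : s (x + y) = s y := by
  have h := abs_sub_map_le_sub s (x + y) y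
  rw [add_sub_cancel_right, hx] at h
  exact sub_eq_zero.mp (abs_nonpos_iff.mp h)

theorem map_pos_of_forall_norm_le_norm_add {S E R : Type*} [NormedAddCommGroup E] [AddCommGroup R]
    [LinearOrder R] [IsOrderedAddMonoid R] [FunLike S E R] [AddGroupSeminormClass S E R] (s : S)
    {ξ : E} (hξ : ∀ ψ, s ψ = 0 → ‖ξ‖ ≤ ‖ψ + ξ‖) (hne : ξ ≠ 0) : 0 < s ξ := by
  refine (apply_nonneg s ξ).lt_of_ne' fun h ↦ hne ?_
  simpa using hξ (-ξ) (by rwa [map_neg_eq_map])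

theorem norm_le_norm_add_of_dual_apply_eq_zero {𝕜 E : Type*} [NontriviallyNormedField 𝕜]
    [SeminormedAddCommGroup E] [NormedSpace 𝕜 E] {f : E →L[𝕜] 𝕜} {ψ ξ : E} (hψ : f ψ = 0)
    (hξ : ‖f ξ‖ = ‖ξ‖ ^ 2) (hf : ‖f‖ ≤ ‖ξ‖) : ‖ξ‖ ≤ ‖ψ + ξ‖ := by
  obtain h | h := (norm_nonneg ξ).eq_or_lt
  · exact h ▸ norm_nonneg _
  · refine le_of_mul_le_mul_left ?_ h
    calc ‖ξ‖ * ‖ξ‖ = ‖f (ψ + ξ)‖ := by rw [map_add, hψ, zero_add, hξ, sq]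
      _ ≤ ‖ξ‖ * ‖ψ + ξ‖ := f.le_of_opNorm_le hf _

theorem norm_le_two_mul_norm_add {E : Type*} [SeminormedAddCommGroup E] {φ ξ : E}
    (h : ‖ξ‖ ≤ ‖φ + ξ‖) : ‖φ‖ ≤ 2 * ‖φ + ξ‖ :=
  calc ‖φ‖ ≤ ‖φ + ξ‖ + ‖ξ‖ := norm_le_add_norm_add φ ξ
    _ ≤ 2 * ‖φ + ξ‖ := by linarith

theorem add_div_norm_add_rpow_le {E : Type*} [NormedAddCommGroup E] {φ ξ : E} (hφ : φ ≠ 0)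
    (hξ : ξ ≠ 0) (hle : ‖ξ‖ ≤ ‖φ + ξ‖) {q : ℝ} (hq : 0 ≤ q) {p r : ℝ} (hp : 0 ≤ p)
    (hr : 0 ≤ r) :
    (p + r) / ‖φ + ξ‖ ^ q ≤ (2 ^ q + 1) * (p / ‖φ‖ ^ q + r / ‖ξ‖ ^ q) := by
  have hφ_pos : 0 < ‖φ‖ := norm_pos_iff.mpr hφ
  have hξ_pos : 0 < ‖ξ‖ := norm_pos_iff.mpr hξ
  have hsum_pos : 0 < ‖φ + ξ‖ := hξ_pos.trans_le hle
  have hφ_rpow : ‖φ‖ ^ q ≤ 2 ^ q * ‖φ + ξ‖ ^ q := by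
    rw [← Real.mul_rpow zero_le_two hsum_pos.le]
    exact Real.rpow_le_rpow hφ_pos.le (norm_le_two_mul_norm_add hle) hq
  exact add_div_le_mul_div_add_div (by positivity) (by positivity) (by positivity) (by positivity)
    hp hr hφ_rpow (Real.rpow_le_rpow hξ_pos.le hle hq)

end Orthogonality

section Bregman

variable {V : Type*} [NormedAddCommGroup V] [NormedSpace ℝ V] {F : V → ℝ} {f : V →L[ℝ] ℝ} {v w : V}

theorem HasGateauxDerivAt.hasLineDerivAt (h : HasGateauxDerivAt F f v) (w : V) :
    HasLineDerivAt ℝ F (f w) v w := by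
  rw [hasLineDerivAt_iff_tendsto_slope_zero]
  simpa only [smul_eq_mul, div_eq_inv_mul] using h w

theorem HasGateauxDerivAt.apply_eq_zero (h : HasGateauxDerivAt F f v)
    (hw : ∀ t : ℝ, F (v + t • w) = F v) : f w = 0 := by
  refine (h.hasLineDerivAt w).unique ?_
  simpa only [HasLineDerivAt, hw] using hasDerivAt_const (0 : ℝ) (F v)

/-- The Bregman distance `d_F(w; v)` of a real functional `F` at the base point `v` in the
direction `w`. The derivative of `F` at `v` is passed as the argument `f`. -/
def bregmanDist (F : V → ℝ) (f : V →L[ℝ] ℝ) (w v : V) : ℝ :=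
  F (v + w) - F v - f w

theorem bregmanDist_nonneg {s : Set V} (hF : ConvexOn ℝ s F) (h : HasGateauxDerivAt F f v)
    (hv : v ∈ s) (hvw : v + w ∈ s) : 0 ≤ bregmanDist F f w v := by
  have hline (t : ℝ) : AffineMap.lineMap v (v + w) t = v + t • w := by
    rw [AffineMap.lineMap_apply_module', add_sub_cancel_left, add_comm]
  have hconv := hF.comp_affineMap (AffineMap.lineMap v (v + w))
  have hderiv : HasDerivAt (F ∘ AffineMap.lineMap v (v + w)) (f w) (0 : ℝ) := by
    have hcomp : F ∘ AffineMap.lineMap v (v + w) = fun t : ℝ ↦ F (v + t • w) :=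
      funext fun t ↦ congrArg F (hline t)
    exact hcomp ▸ h.hasLineDerivAt w
  have hslope := hconv.le_slope_of_hasDerivAt (x := 0) (y := 1) (by simpa using hv)
    (by simpa using hvw) one_pos hderiv
  simpa [slope_def_field, bregmanDist] using hslope

theorem bregmanDist_add_left {ψ : V} (h : HasGateauxDerivAt F f v)
    (hinv : ∀ (x : V) (t : ℝ), F (x + t • ψ) = F x) (w : V) :
    bregmanDist F f (ψ + w) v = bregmanDist F f w v := by
  have hshift : F (v + (ψ + w)) = F (v + w) := by
    simpa only [one_smul, add_assoc, add_comm w ψ] using hinv (v + w) 1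
  rw [bregmanDist, bregmanDist, map_add, h.apply_eq_zero (hinv v), zero_add, hshift]

theorem sum_bregmanDist_add_div_norm_add_rpow_le {ι : Type*} (J : Finset ι) (x y : ι → V)
    (hF : ConvexOn ℝ Set.univ F) (h : HasGateauxDerivAt F f v) {C : ℝ} (hC : 0 ≤ C)
    (htri : ∀ x y, bregmanDist F f (x + y) v ≤ C * (bregmanDist F f x v + bregmanDist F f y v))
    {φ ξ : V} (hφ : φ ≠ 0) (hξ : ξ ≠ 0) (hle : ‖ξ‖ ≤ ‖φ + ξ‖) {q : ℝ} (hq : 0 ≤ q) :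
    (∑ j ∈ J, bregmanDist F f (x j + y j) v) / ‖φ + ξ‖ ^ q ≤
      (2 ^ q + 1) * C *
        ∑ j ∈ J, (bregmanDist F f (x j) v / ‖φ‖ ^ q + bregmanDist F f (y j) v / ‖ξ‖ ^ q) := by
  have hnonneg (w : V) : 0 ≤ bregmanDist F f w v :=
    bregmanDist_nonneg hF h (Set.mem_univ _) (Set.mem_univ _)
  rw [Finset.sum_div, Finset.mul_sum]
  refine Finset.sum_le_sum fun j _ ↦ ?_
  calc bregmanDist F f (x j + y j) v / ‖φ + ξ‖ ^ q
      ≤ C * (bregmanDist F f (x j) v + bregmanDist F f (y j) v) / ‖φ + ξ‖ ^ q := by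
        gcongr
        exact htri _ _
    _ = C * ((bregmanDist F f (x j) v + bregmanDist F f (y j) v) / ‖φ + ξ‖ ^ q) :=
        mul_div_assoc _ _ _
    _ ≤ C * ((2 ^ q + 1) *
          (bregmanDist F f (x j) v / ‖φ‖ ^ q + bregmanDist F f (y j) v / ‖ξ‖ ^ q)) := by
        gcongr
        exact add_div_norm_add_rpow_le hφ hξ hle hq (hnonneg _) (hnonneg _)
    _ = _ := by ring

end Bregman

theorem stmt_14_general {V ι : Type*} [NormedAddCommGroup V] [NormedSpace ℝ V] [Fintype ι]
    (s : Seminorm ℝ V) {F₀ F₁ : V → ℝ} {f₀ f₁ : V →L[ℝ] ℝ} {v : V}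
    (hconv₀ : ConvexOn ℝ Set.univ F₀) (hconv₁ : ConvexOn ℝ Set.univ F₁)
    (hF₀ : HasGateauxDerivAt F₀ f₀ v) (hF₁ : HasGateauxDerivAt F₁ f₁ v)
    (hinv : ∀ x ψ : V, s ψ = 0 → F₀ (x + ψ) = F₀ x)
    {ε q C : ℝ} (hε : 0 ≤ ε) (hq : 0 ≤ q) (hC : 0 ≤ C)
    (htri : ∀ x y,
      bregmanDist F₁ f₁ (x + y) v ≤ C * (bregmanDist F₁ f₁ x v + bregmanDist F₁ f₁ y v))
    {φ ξ : V} (hφ : s φ = 0) (hφ_ne : φ ≠ 0)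
    (hξ : ∀ ψ, s ψ = 0 → ‖ξ‖ ≤ ‖ψ + ξ‖) (hξ_ne : ξ ≠ 0)
    (φj ξj : ι → V) (hφj : ∀ j, s (φj j) = 0) :
    0 < s (φ + ξ) ^ q + ε * ‖φ + ξ‖ ^ q ∧
    (∑ j, (bregmanDist F₀ f₀ (φj j + ξj j) v + ε * bregmanDist F₁ f₁ (φj j + ξj j) v)) /
        (s (φ + ξ) ^ q + ε * ‖φ + ξ‖ ^ q) ≤
      (∑ j, bregmanDist F₀ f₀ (ξj j) v) / s ξ ^ q +
        (2 ^ q + 1) * C * ∑ j,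
          (bregmanDist F₁ f₁ (φj j) v / ‖φ‖ ^ q + bregmanDist F₁ f₁ (ξj j) v / ‖ξ‖ ^ q) := by
  have hsξ : 0 < s ξ := map_pos_of_forall_norm_le_norm_add s hξ hξ_ne
  have hsum_pos : 0 < ‖φ + ξ‖ := (norm_pos_iff.mpr hξ_ne).trans_le (hξ φ hφ)
  have hker (j : ι) : bregmanDist F₀ f₀ (φj j + ξj j) v = bregmanDist F₀ f₀ (ξj j) v :=
    bregmanDist_add_left hF₀
      (fun x t ↦ hinv x _ (by rw [map_smul_eq_mul, hφj, mul_zero])) _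
  have hnonneg₀ (w : V) : 0 ≤ bregmanDist F₀ f₀ w v :=
    bregmanDist_nonneg hconv₀ hF₀ (Set.mem_univ _) (Set.mem_univ _)
  have hnonneg₁ (w : V) : 0 ≤ bregmanDist F₁ f₁ w v :=
    bregmanDist_nonneg hconv₁ hF₁ (Set.mem_univ _) (Set.mem_univ _)
  rw [map_add_eq_of_map_eq_zero s hφ]
  simp only [hker, Finset.sum_add_distrib (f := fun j ↦ bregmanDist F₀ f₀ (ξj j) v),
    ← Finset.mul_sum]
  refine ⟨by positivity, ?_⟩
  exact (add_mul_div_add_mul_le (Finset.sum_nonneg fun j _ ↦ hnonneg₀ _)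
    (Finset.sum_nonneg fun j _ ↦ hnonneg₁ _) (by positivity) (by positivity) hε).trans
    (add_le_add_right (sum_bregmanDist_add_div_norm_add_rpow_le _ φj ξj hconv₁ hF₁ hC htri hφ_ne
      hξ_ne (hξ φ hφ) hq) _)

/-- the key estimate in the ε-independent bound for nearly semicoercive
problems (from the proof of Theorem 5.6). Here `s` is the seminorm whose kernel is
`𝒩 = ker s`, and `ξ ∈ J*𝒩°`. -/
theorem stmt_14 {V : Type*} [NormedAddCommGroup V] [NormedSpace ℝ V] [CompleteSpace V]
    (N : ℕ) (Vj : Fin N → Submodule ℝ V) (hVjc : ∀ j, IsClosed ((Vj j : Set V)))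
    (s : Seminorm ℝ V) (hscont : Continuous (s : V → ℝ))
    (Csharp : ℝ) (hCsharp : 0 < Csharp)
    (hquot : ∀ v : V, (⨅ ψ : {x : V // s x = 0}, ‖v + (ψ : V)‖) ≤ Csharp * s v)
    (F₀ F₁ : V → ℝ)
    (hconv₀ : ConvexOn ℝ Set.univ F₀) (hconv₁ : ConvexOn ℝ Set.univ F₁)
    (F₀' F₁' : V → V →L[ℝ] ℝ)
    (hF₀' : ∀ v : V, HasGateauxDerivAt F₀ (F₀' v) v)
    (hF₁' : ∀ v : V, HasGateauxDerivAt F₁ (F₁' v) v)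
    (hinv : ∀ v ψ : V, s ψ = 0 → F₀ (v + ψ) = F₀ v)
    (ε : ℝ) (hε : 0 < ε) (q : ℝ) (hq : 1 < q)
    (Ctri : ℝ) (hCtri : 0 < Ctri)
    (htri : ∀ v x y : V,
      F₁ (v + (x + y)) - F₁ v - F₁' v (x + y) ≤
        Ctri * ((F₁ (v + x) - F₁ v - F₁' v x) + (F₁ (v + y) - F₁ v - F₁' v y)))
    (v φ ξ : V) (hφ : s φ = 0) (hφne : φ ≠ 0)
    (hξ : ∃ f : V →L[ℝ] ℝ, (∀ ψ : V, s ψ = 0 → f ψ = 0) ∧ f ξ = ‖ξ‖ ^ 2 ∧ ‖f‖ = ‖ξ‖)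
    (hξne : ξ ≠ 0)
    (φj ξj : Fin N → V)
    (hφj : ∀ j, φj j ∈ Vj j ∧ s (φj j) = 0) (hξj : ∀ j, ξj j ∈ Vj j)
    (hφsum : (∑ j, φj j) = φ) (hξsum : (∑ j, ξj j) = ξ) :
    0 < (s (φ + ξ)) ^ q + ε * ‖φ + ξ‖ ^ q
    ∧
    (∑ j, ((F₀ (v + (φj j + ξj j)) - F₀ v - F₀' v (φj j + ξj j)) +
        ε * (F₁ (v + (φj j + ξj j)) - F₁ v - F₁' v (φj j + ξj j)))) /
      ((s (φ + ξ)) ^ q + ε * ‖φ + ξ‖ ^ q)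
    ≤ (∑ j, (F₀ (v + ξj j) - F₀ v - F₀' v (ξj j))) / (s ξ) ^ q
      + ((2 : ℝ) ^ q + 1) * Ctri *
        ∑ j, ((F₁ (v + φj j) - F₁ v - F₁' v (φj j)) / ‖φ‖ ^ q +
              (F₁ (v + ξj j) - F₁ v - F₁' v (ξj j)) / ‖ξ‖ ^ q) := by
  obtain ⟨f, hker, hfξ, hf⟩ := hξ
  exact stmt_14_general s hconv₀ hconv₁ (hF₀' v) (hF₁' v) hinv hε.le (by linarith) hCtri.le
    (htri v) hφ hφne (fun ψ hψ ↦ norm_le_norm_add_of_dual_apply_eq_zero (hker ψ hψ)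
      (by rw [hfξ, norm_pow, norm_norm]) hf.le) hξne φj ξj fun j ↦ (hφj j).2
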